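/- arXiv:2411.11722 — 3 statements merged into one kernel-verified Lean document; each statement's English description precedes it below -/
import Mathlib

section
/- The gadget system has a real solution in which at most 3n of the 5n variables are nonzero if and only if there exists a subset J of {1,...,n} with sum over j in J of a_j equal to a_0. -/
/-- The number of nonzero entries among the five variables of a single gadget. -/
noncomputable def gadgetSupport (s1 s2 t1 t2 x : ℝ) : ℕ :=
  (if s1 ≠ 0 then 1 else 0) + (if s2 ≠ 0 then 1 else 0) + (if t1 ≠ 0 then 1 else 0) +
    (if t2 ≠ 0 then 1 else 0) + (if x ≠ 0 then 1 else 0)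

theorem sum_gadgetSupport {ι : Type*} [Fintype ι] (s1 s2 t1 t2 x : ι → ℝ) :
    ∑ j, gadgetSupport (s1 j) (s2 j) (t1 j) (t2 j) (x j) =
      (Finset.univ.filter (fun j => s1 j ≠ 0)).card +
      (Finset.univ.filter (fun j => s2 j ≠ 0)).card +
      (Finset.univ.filter (fun j => t1 j ≠ 0)).card +
      (Finset.univ.filter (fun j => t2 j ≠ 0)).card +
      (Finset.univ.filter (fun j => x j ≠ 0)).card := by
  simp only [gadgetSupport, Finset.sum_add_distrib, Finset.card_filter]

/-- With `s₁ = t₁ = 1 - s`, `s₂ = t₂ = s` and `x = 1 + b s`, a gadget has three nonzero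
variables when `s ∈ {0, 1}`. -/
theorem gadgetSupport_eq_three {b s : ℝ} (hb : 0 < b) (h : s = 0 ∨ s = 1) :
    gadgetSupport (1 - s) s (1 - s) s (1 + b * s) = 3 := by
  have hb' : 1 + b ≠ 0 := by positivity
  rcases h with rfl | rfl <;> simp [gadgetSupport, hb']

theorem four_le_gadgetSupport {b s : ℝ} (h0 : s ≠ 0) (h1 : s ≠ 1) :
    4 ≤ gadgetSupport (1 - s) s (1 - s) s (1 + b * s) := by
  have h1' : 1 - s ≠ 0 := sub_ne_zero.mpr h1.symm
  simp [gadgetSupport, h0, h1']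

theorem three_le_gadgetSupport {b s : ℝ} (hb : 0 < b) :
    3 ≤ gadgetSupport (1 - s) s (1 - s) s (1 + b * s) := by
  by_cases h : s = 0 ∨ s = 1
  · exact (gadgetSupport_eq_three hb h).ge
  · rw [not_or] at h
    exact (Nat.le_succ 3).trans (four_le_gadgetSupport h.1 h.2)

/-- The equations of a gadget determine all its variables from `s₂`. -/
theorem gadget_eq_param {b s1 s2 t1 t2 x : ℝ} (hb : 0 < b) (hs : s1 + s2 = 1)
    (hsx : s1 - (b - 1) * s2 + x = 2) (ht : t1 + t2 = 1) (htx : t1 - (b - 1) * t2 + x = 2) :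
    s1 = 1 - s2 ∧ t1 = 1 - s2 ∧ t2 = s2 ∧ x = 1 + b * s2 := by
  have h : t2 = s2 := mul_left_cancel₀ hb.ne' (by linarith)
  subst h
  exact ⟨by linarith, by linarith, rfl, by linarith⟩

/-- The gadget system (on `5n` real variables `s₁ⱼ, s₂ⱼ, t₁ⱼ, t₂ⱼ, xⱼ`)
has a real solution in which at most `3n` of the `5n` variables are nonzero
if and only if there exists a subset `J` of `{1,…,n}` with `∑_{j∈J} aⱼ = a₀`. -/
theorem gadget_system_solvable_iff_subset_sum
    (n : ℕ) (hn : 1 ≤ n) (a0 : ℤ) (ha0 : 0 < a0) (a : Fin n → ℤ) (ha : ∀ j, 1 < a j) :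
    (∃ s1 s2 t1 t2 x : Fin n → ℝ,
      (∀ j, s1 j + s2 j = 1) ∧
      (∀ j, s1 j - ((a j : ℝ) - 1) * s2 j + x j = 2) ∧
      (∀ j, t1 j + t2 j = 1) ∧
      (∀ j, t1 j - ((a j : ℝ) - 1) * t2 j + x j = 2) ∧
      (∑ j, x j = (n : ℝ) + (a0 : ℝ)) ∧
      ((Finset.univ.filter (fun j => s1 j ≠ 0)).card +
       (Finset.univ.filter (fun j => s2 j ≠ 0)).card +
       (Finset.univ.filter (fun j => t1 j ≠ 0)).card +
       (Finset.univ.filter (fun j => t2 j ≠ 0)).card +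
       (Finset.univ.filter (fun j => x j ≠ 0)).card ≤ 3 * n)) ↔
    (∃ J : Finset (Fin n), ∑ j ∈ J, a j = a0) := by
  have hb : ∀ j, (0 : ℝ) < a j := fun j => by exact_mod_cast zero_lt_one.trans (ha j)
  constructor
  · rintro ⟨s1, s2, t1, t2, x, hs, hsx, ht, htx, hsum, hcard⟩
    have key j := gadget_eq_param (hb j) (hs j) (hsx j) (ht j) (htx j)
    obtain rfl : s1 = fun j => 1 - s2 j := funext fun j => (key j).1
    obtain rfl : t1 = fun j => 1 - s2 j := funext fun j => (key j).2.1
    obtain rfl : t2 = s2 := funext fun j => (key j).2.2.1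
    obtain rfl : x = fun j => 1 + a j * t2 j := funext fun j => (key j).2.2.2
    rw [← sum_gadgetSupport] at hcard
    have hbool : ∀ j, t2 j = 0 ∨ t2 j = 1 := by
      intro j
      by_contra h
      rw [not_or] at h
      have hlt := Finset.sum_lt_sum (s := Finset.univ) (f := fun _ : Fin n => 3)
        (fun i _ => three_le_gadgetSupport (s := t2 i) (hb i))
        ⟨j, Finset.mem_univ j, four_le_gadgetSupport h.1 h.2⟩
      simp only [Finset.sum_const, Finset.card_univ, Fintype.card_fin, smul_eq_mul] at hlt
      omega
    refine ⟨Finset.univ.filter fun j => t2 j = 1, ?_⟩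
    have hterm : ∀ j, (a j : ℝ) * t2 j = if t2 j = 1 then (a j : ℝ) else 0 := by
      intro j
      rcases hbool j with h | h <;> simp [h]
    simp only [Finset.sum_add_distrib, hterm, Finset.sum_const, Finset.card_univ,
      Fintype.card_fin, nsmul_eq_mul, mul_one, add_right_inj, ← Finset.sum_filter] at hsum
    exact_mod_cast hsum
  · rintro ⟨J, hJ⟩
    let s : Fin n → ℝ := fun j => if j ∈ J then 1 else 0
    have hbool : ∀ j, s j = 0 ∨ s j = 1 := fun j => (ite_eq_or_eq _ _ _).symm
    refine ⟨fun j => 1 - s j, s, fun j => 1 - s j, s, fun j => 1 + a j * s j,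
      fun j => by ring, fun j => by ring, fun j => by ring, fun j => by ring, ?_, ?_⟩
    · simp [s, Finset.sum_add_distrib, ← hJ]
    · rw [← sum_gadgetSupport]
      simp [fun j => gadgetSupport_eq_three (hb j) (hbool j), mul_comm]
end

section
/- Suppose (s,t,x) is a real solution of the gadget system in which at most 3n of the 5n variables are nonzero. Then for every j with 1 <= j <= n, exactly one of s_{1j}, s_{2j} is nonzero and exactly one of t_{1j}, t_{2j} is nonzero; moreover either (s_{1j}, s_{2j}, x_j) = (1, 0, 1) or (s_{1j}, s_{2j}, x_j) = (0, 1, a_j + 1); and the index set J = { j : s_{2j} != 0 } satisfies sum over j in J of a_j equal to a_0. -/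
/-- A single gadget with parameter `a > 1` has at least three nonzero variables. If it has at
most three, then the two pairs agree and are `(1, 0)` or `(0, 1)`, with `x = 1` or `x = a + 1`
respectively. -/
lemma gadget_support {a s1 s2 t1 t2 x : ℝ} (ha : 1 < a)
    (hs : s1 + s2 = 1) (hsx : s1 - (a - 1) * s2 + x = 2)
    (ht : t1 + t2 = 1) (htx : t1 - (a - 1) * t2 + x = 2) :
    let c := (if s1 ≠ 0 then 1 else 0) + (if s2 ≠ 0 then 1 else 0) + (if t1 ≠ 0 then 1 else 0) +
      (if t2 ≠ 0 then 1 else 0) + (if x ≠ 0 then 1 else 0)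
    3 ≤ c ∧ (c ≤ 3 → t1 = s1 ∧ t2 = s2 ∧
      ((s1 = 1 ∧ s2 = 0 ∧ x = 1) ∨ (s1 = 0 ∧ s2 = 1 ∧ x = a + 1))) := by
  have h2 : t2 = s2 := mul_left_cancel₀ (by linarith : a ≠ 0) (by linarith)
  have h1 : t1 = s1 := by linarith
  subst h2 h1
  by_cases hs2 : t2 = 0
  · have hs1 : t1 = 1 := by linarith
    have hx : x = 1 := by subst hs2 hs1; linarith
    simp [hs1, hs2, hx]
  · by_cases hs1 : t1 = 0
    · have hs2' : t2 = 1 := by linarith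
      have hx : x = a + 1 := by subst hs2' hs1; linarith
      have hx0 : a + 1 ≠ 0 := by linarith
      simp [hs1, hs2', hx, hx0]
    · simp only [ne_eq, hs1, hs2, not_false_eq_true, if_true]
      constructor <;> omega

/-- If `(s,t,x)` is a real solution of the gadget system with at most `3n`
nonzero variables, then for each `j` exactly one of `s₁ⱼ, s₂ⱼ` is nonzero and exactly one
of `t₁ⱼ, t₂ⱼ` is nonzero; moreover either `(s₁ⱼ, s₂ⱼ, xⱼ) = (1,0,1)` or
`(s₁ⱼ, s₂ⱼ, xⱼ) = (0,1,aⱼ+1)`; and `J = {j : s₂ⱼ ≠ 0}` satisfies `∑_{j∈J} aⱼ = a₀`. -/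
theorem gadget_solution_structure
    (n : ℕ) (hn : 1 ≤ n) (a0 : ℤ) (ha0 : 0 < a0) (a : Fin n → ℤ) (ha : ∀ j, 1 < a j)
    (s1 s2 t1 t2 x : Fin n → ℝ)
    (hs : ∀ j, s1 j + s2 j = 1)
    (hsx : ∀ j, s1 j - ((a j : ℝ) - 1) * s2 j + x j = 2)
    (ht : ∀ j, t1 j + t2 j = 1)
    (htx : ∀ j, t1 j - ((a j : ℝ) - 1) * t2 j + x j = 2)
    (hsum : ∑ j, x j = (n : ℝ) + (a0 : ℝ))
    (hcard : (Finset.univ.filter (fun j => s1 j ≠ 0)).card +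
             (Finset.univ.filter (fun j => s2 j ≠ 0)).card +
             (Finset.univ.filter (fun j => t1 j ≠ 0)).card +
             (Finset.univ.filter (fun j => t2 j ≠ 0)).card +
             (Finset.univ.filter (fun j => x j ≠ 0)).card ≤ 3 * n) :
    (∀ j, ((s1 j ≠ 0 ∧ s2 j = 0) ∨ (s1 j = 0 ∧ s2 j ≠ 0)) ∧
          ((t1 j ≠ 0 ∧ t2 j = 0) ∨ (t1 j = 0 ∧ t2 j ≠ 0)) ∧
          ((s1 j = 1 ∧ s2 j = 0 ∧ x j = 1) ∨
           (s1 j = 0 ∧ s2 j = 1 ∧ x j = (a j : ℝ) + 1))) ∧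
    ∑ j ∈ Finset.univ.filter (fun j => s2 j ≠ 0), a j = a0 := by
  have ha' : ∀ j, (1 : ℝ) < a j := fun j => by exact_mod_cast ha j
  have key := fun j => gadget_support (ha' j) (hs j) (hsx j) (ht j) (htx j)
  simp only [Finset.card_filter, ← Finset.sum_add_distrib] at hcard
  have hthree : ∑ _j : Fin n, 3 = 3 * n := by simp [mul_comm]
  have hcount := (Finset.sum_eq_sum_iff_of_le fun j _ => (key j).1).1
    (le_antisymm (Finset.sum_le_sum fun j _ => (key j).1) (hthree ▸ hcard))
  have hsol := fun j => (key j).2 (hcount j (Finset.mem_univ j)).ge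
  refine ⟨fun j => ?_, ?_⟩
  · obtain ⟨h1, h2, h⟩ := hsol j
    refine ⟨?_, ?_, h⟩ <;> rcases h with ⟨e1, e2, -⟩ | ⟨e1, e2, -⟩ <;> simp [h1, h2, e1, e2]
  · have hx : ∀ j, x j = 1 + if s2 j ≠ 0 then (a j : ℝ) else 0 := fun j => by
      rcases (hsol j).2.2 with ⟨-, e2, ex⟩ | ⟨-, e2, ex⟩ <;> simp [e2, ex, add_comm]
    simp only [hx, Finset.sum_add_distrib, ← Finset.sum_filter] at hsum
    simp only [Finset.sum_const, Finset.card_univ, Fintype.card_fin, nsmul_eq_mul, mul_one,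
      add_right_inj] at hsum
    exact_mod_cast hsum
end

section
/- There exists a vector x : {1,...,n} -> R satisfying sum_{j=1}^n x_j = N, sum_{j=1}^n a_j x_j = a_0, at most N of the entries x_j are nonzero, and sum_{j=1}^n x_j^2 <= N, if and only if there exists a subset J of {1,...,n} with |J| = N such that sum over j in J of a_j equals a_0. -/
/-- A real vector with coordinate sum `N`, at most `N` nonzero entries and sum of squares at most
`N` is the indicator of its support. -/
theorem eq_indicator_support_of_sum_eq_of_sum_sq_le {ι : Type*} [Fintype ι] {N : ℕ} {x : ι → ℝ}
    (hsum : ∑ j, x j = (N : ℝ)) (hcard : (Finset.univ.filter (fun j => x j ≠ 0)).card ≤ N)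
    (hsq : ∑ j, (x j) ^ 2 ≤ (N : ℝ)) (j : ι) : x j = if x j ≠ 0 then 1 else 0 := by
  have hexpand : ∑ j, (x j - if x j ≠ 0 then 1 else 0) ^ 2 =
      ∑ j, (x j) ^ 2 - 2 * ∑ j, x j + ((Finset.univ.filter (fun j => x j ≠ 0)).card : ℝ) := by
    rw [← Finset.sum_boole, Finset.mul_sum, ← Finset.sum_sub_distrib, ← Finset.sum_add_distrib]
    refine Finset.sum_congr rfl fun j _ => ?_
    split_ifs with h
    · ring
    · rw [not_not.mp h]; ring
  have hcard' : ((Finset.univ.filter (fun j => x j ≠ 0)).card : ℝ) ≤ N := by exact_mod_cast hcard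
  have hzero : ∑ j, (x j - if x j ≠ 0 then 1 else 0) ^ 2 = 0 :=
    le_antisymm (by rw [hexpand]; linarith) (Finset.sum_nonneg fun j _ => sq_nonneg _)
  have hj := (Finset.sum_eq_zero_iff_of_nonneg fun j _ => sq_nonneg _).mp hzero j
    (Finset.mem_univ j)
  exact sub_eq_zero.mp (pow_eq_zero_iff two_ne_zero |>.mp hj)

/-- There is `x : Fin n → ℝ` with `∑ xⱼ = N`, `∑ aⱼ xⱼ = a₀`, at most `N`
nonzero entries, and `∑ xⱼ² ≤ N`, if and only if there is `J ⊆ {1,…,n}` with `|J| = N`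
and `∑_{j∈J} aⱼ = a₀`. -/
theorem tworow_card_iff_subset_sum
    (n : ℕ) (hn : 1 ≤ n) (N : ℕ) (hN1 : 1 ≤ N) (hNn : N ≤ n)
    (a0 : ℤ) (ha0 : 0 < a0) (a : Fin n → ℤ) (ha : ∀ j, 0 < a j) :
    (∃ x : Fin n → ℝ,
      (∑ j, x j = (N : ℝ)) ∧
      (∑ j, (a j : ℝ) * x j = (a0 : ℝ)) ∧
      (Finset.univ.filter (fun j => x j ≠ 0)).card ≤ N ∧
      (∑ j, (x j) ^ 2 ≤ (N : ℝ))) ↔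
    (∃ J : Finset (Fin n), J.card = N ∧ ∑ j ∈ J, a j = a0) := by
  constructor
  · rintro ⟨x, hsum, hdot, hcard, hsq⟩
    have hx := eq_indicator_support_of_sum_eq_of_sum_sq_le hsum hcard hsq
    refine ⟨Finset.univ.filter (fun j => x j ≠ 0), ?_, ?_⟩
    · rw [Finset.sum_congr rfl fun j _ => hx j, Finset.sum_boole] at hsum
      exact_mod_cast hsum
    · have hterm : ∀ j, (a j : ℝ) * x j = if x j ≠ 0 then (a j : ℝ) else 0 := fun j => by
        conv_lhs => rw [hx j]
        rw [mul_ite, mul_one, mul_zero]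
      rw [Finset.sum_congr rfl fun j _ => hterm j, ← Finset.sum_filter] at hdot
      exact_mod_cast hdot
  · rintro ⟨J, rfl, rfl⟩
    exact ⟨fun j => if j ∈ J then 1 else 0, by simp, by simp, by simp, by simp⟩
end
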